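/- Let n ≥ 2, let f : ℂⁿ → ℂ be holomorphic, and let p ∈ ℂⁿ with f(p) ≠ 0. Let X be a holomorphic map from an open neighborhood of p in ℂⁿ to ℂⁿ with X(p) ≠ 0 and df(p)(X(p)) = 0, and let Z : B(0,ε) → ℂⁿ be holomorphic with Z(0) = p, Z′(T) = X(Z(T)), and f(Z(T)) ≠ 0 for all T. Define h : B(0,ε) → ℝ by h(T) = (1 + |f(Z(T))|²·u(|f(Z(T))|²)²)·|df(Z(T))(X(Z(T)))|² + ‖X(Z(T))‖². Then h(0) = ‖X(p)‖², (∂h)(0) = ⟨dX(p)(X(p)), X(p)⟩, (∂̄h)(0) = ⟨X(p), dX(p)(X(p))⟩, and (∂∂̄h)(0) ≥ ‖dX(p)(X(p))‖², where dX(p) : ℂⁿ → ℂⁿ is the complex derivative of X at p. -/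

import Mathlib

open Complex Filter Topology Metric
open scoped ComplexOrder

/-- The function `u(t) = (t-1)/(t log t)` for `t ≠ 1`, extended by `u(1) = 1`. -/
noncomputable def u (t : ℝ) : ℝ := if t = 1 then 1 else (t - 1) / (t * Real.log t)

/-- Wirtinger derivative `∂g` of a complex-valued function on `ℂ` (real-differentiable sense). -/
noncomputable def wdz (g : ℂ → ℂ) (z : ℂ) : ℂ :=
  (fderiv ℝ g z 1 - Complex.I * fderiv ℝ g z Complex.I) / 2

/-- Wirtinger derivative `∂̄g` of a complex-valued function on `ℂ`. -/
noncomputable def wdzbar (g : ℂ → ℂ) (z : ℂ) : ℂ :=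
  (fderiv ℝ g z 1 + Complex.I * fderiv ℝ g z Complex.I) / 2

/-- `∂h` for a real-valued `h`. -/
noncomputable def wdzR (h : ℂ → ℝ) : ℂ → ℂ := wdz fun w => (h w : ℂ)

/-- `∂̄h` for a real-valued `h`. -/
noncomputable def wdzbarR (h : ℂ → ℝ) : ℂ → ℂ := wdzbar fun w => (h w : ℂ)

/-- `∂∂̄h` for a real-valued `h`. -/
noncomputable def wlapR (h : ℂ → ℝ) : ℂ → ℂ := wdz (wdzbarR h)

/-- The numerator `h·∂∂̄h − ∂h·∂̄h` of (−1/2 times) the Gaussian curvature of `h|dz|²`. -/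
noncomputable def curvNum (h : ℂ → ℝ) (z : ℂ) : ℂ :=
  (h z : ℂ) * wlapR h z - wdzR h z * wdzbarR h z

/-- The Gaussian curvature `K = −2(h·∂∂̄h − ∂h·∂̄h)/h³` of the conformal metric `h|dz|²`. -/
noncomputable def gaussCurv (h : ℂ → ℝ) (z : ℂ) : ℂ :=
  -2 * curvNum h z / (h z : ℂ) ^ 3

/-!
Along the curve `Z` the function `T ↦ df(Z(T))(X(Z(T)))` is `g = (f ∘ Z)'`, so `g` is holomorphic,
and it vanishes at the base point. By the Leibniz rule the term `φ |g|²` then has vanishing `∂` and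
`∂̄` at that point and satisfies `∂∂̄(φ |g|²) = φ |g'|² ≥ 0` there, whatever the `C²` weight `φ ≥ 0`
is. The remaining term `‖W‖²`, with `W = X ∘ Z` holomorphic and `W' = dX(X)`, gives the asserted
values `∂‖W‖² = ⟨W, W'⟩`, `∂̄‖W‖² = ⟨W', W⟩` and `∂∂̄‖W‖² = ‖W'‖²`, where the inner product is
conjugate-linear in its first argument, as in Mathlib.
-/

theorem analyticAt_dslope {𝕜 E : Type*} [NontriviallyNormedField 𝕜] [NormedAddCommGroup E]
    [NormedSpace 𝕜 E] {f : 𝕜 → E} {a b : 𝕜} (ha : AnalyticAt 𝕜 f a) (hb : AnalyticAt 𝕜 f b) :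
    AnalyticAt 𝕜 (dslope f a) b := by
  rcases eq_or_ne b a with rfl | hba
  · obtain ⟨q, hq⟩ := ha
    exact ⟨_, hq.has_fpower_series_dslope_fslope⟩
  · have hquot : AnalyticAt 𝕜 (fun x => (x - a)⁻¹ • (f x - f a)) b :=
      ((analyticAt_id.sub analyticAt_const).inv (sub_ne_zero.mpr hba)).smul
        (hb.sub analyticAt_const)
    exact hquot.congr (dslope_eventuallyEq_slope_of_ne f hba).symm

theorem dslope_log_one_of_ne {t : ℝ} (ht : t ≠ 1) :
    dslope Real.log 1 t = Real.log t / (t - 1) := by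
  rw [dslope_of_ne _ ht, slope_def_field, Real.log_one, sub_zero]

theorem dslope_log_one_ne_zero {t : ℝ} (ht : 0 < t) : dslope Real.log 1 t ≠ 0 := by
  rcases eq_or_ne t 1 with rfl | h1
  · simp
  · rw [dslope_log_one_of_ne h1]
    exact div_ne_zero (Real.log_ne_zero_of_pos_of_ne_one ht h1) (sub_ne_zero.mpr h1)

theorem u_eq_inv_mul_dslope_log (t : ℝ) : u t = (t * dslope Real.log 1 t)⁻¹ := by
  rcases eq_or_ne t 1 with rfl | h1
  · simp [u]
  · rw [u, if_neg h1, dslope_log_one_of_ne h1, ← mul_div_assoc, inv_div]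

theorem analyticAt_u {t : ℝ} (ht : 0 < t) : AnalyticAt ℝ u t := by
  rw [funext u_eq_inv_mul_dslope_log]
  exact (analyticAt_id.mul (analyticAt_dslope (analyticAt_log one_pos) (analyticAt_log ht))).inv
    (mul_ne_zero ht.ne' (dslope_log_one_ne_zero ht))

/-- The weight `1 + |w|² u(|w|²)²` by which the Grauert-type metric multiplies `|df|²` at a point
where `f` takes the value `w`. -/
noncomputable def grauertWeight (w : ℂ) : ℝ := 1 + ‖w‖ ^ 2 * u (‖w‖ ^ 2) ^ 2

theorem grauertWeight_nonneg (w : ℂ) : 0 ≤ grauertWeight w := by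
  unfold grauertWeight
  positivity

theorem contDiffAt_grauertWeight {w : ℂ} (hw : w ≠ 0) {m : WithTop ℕ∞} :
    ContDiffAt ℝ m grauertWeight w := by
  have hsq : ContDiffAt ℝ m (fun v : ℂ => ‖v‖ ^ 2) w := contDiffAt_id.norm_sq ℂ
  have hu : ContDiffAt ℝ m (fun v : ℂ => u (‖v‖ ^ 2)) w :=
    ContDiffAt.comp (g := u) w (analyticAt_u (pow_pos (norm_pos_iff.mpr hw) 2)).contDiffAt hsq
  exact contDiffAt_const.add (hsq.mul (hu.pow 2))

theorem eventually_differentiableAt_of_contDiffAt {𝕜 E F : Type*} [NontriviallyNormedField 𝕜]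
    [NormedAddCommGroup E] [NormedSpace 𝕜 E] [NormedAddCommGroup F] [NormedSpace 𝕜 F]
    {m : WithTop ℕ∞} {f : E → F} {x : E} (hf : ContDiffAt 𝕜 m f x) (hm : m ≠ 0) :
    ∀ᶠ y in 𝓝 x, DifferentiableAt 𝕜 f y :=
  ((hf.of_le (ENat.one_le_iff_ne_zero_withTop.mpr hm)).eventually (by simp)).mono
    fun _ hy => hy.differentiableAt one_ne_zero

section Wirtinger

variable {a b : ℂ → ℂ} {z : ℂ}

theorem wdz_congr (hab : a =ᶠ[𝓝 z] b) : wdz a z = wdz b z := by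
  simp only [wdz, hab.fderiv_eq]

theorem wdzbar_eventuallyEq (hab : a =ᶠ[𝓝 z] b) : wdzbar a =ᶠ[𝓝 z] wdzbar b := by
  filter_upwards [hab.fderiv (𝕜 := ℝ)] with w hw
  simp only [wdzbar, hw]

theorem wdz_add (ha : DifferentiableAt ℝ a z) (hb : DifferentiableAt ℝ b z) :
    wdz (fun w => a w + b w) z = wdz a z + wdz b z := by
  simp only [wdz, fderiv_fun_add ha hb, add_apply]
  ring

theorem wdzbar_add (ha : DifferentiableAt ℝ a z) (hb : DifferentiableAt ℝ b z) :
    wdzbar (fun w => a w + b w) z = wdzbar a z + wdzbar b z := by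
  simp only [wdzbar, fderiv_fun_add ha hb, add_apply]
  ring

theorem wdz_mul (ha : DifferentiableAt ℝ a z) (hb : DifferentiableAt ℝ b z) :
    wdz (fun w => a w * b w) z = wdz a z * b z + a z * wdz b z := by
  simp only [wdz, fderiv_fun_mul ha hb, add_apply, smul_apply, smul_eq_mul]
  ring

theorem wdzbar_mul (ha : DifferentiableAt ℝ a z) (hb : DifferentiableAt ℝ b z) :
    wdzbar (fun w => a w * b w) z = wdzbar a z * b z + a z * wdzbar b z := by
  simp only [wdzbar, fderiv_fun_mul ha hb, add_apply, smul_apply, smul_eq_mul]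
  ring

theorem differentiableAt_wdzbar (ha : ContDiffAt ℝ 2 a z) : DifferentiableAt ℝ (wdzbar a) z := by
  have hd : DifferentiableAt ℝ (fderiv ℝ a) z :=
    (ha.fderiv_right (m := 1) (by norm_num)).differentiableAt one_ne_zero
  have hv (v : ℂ) : DifferentiableAt ℝ (fun w => fderiv ℝ a w v) z :=
    hd.clm_apply (differentiableAt_const v)
  exact ((hv 1).add ((hv I).const_mul I)).mul_const (2⁻¹ : ℂ)

theorem wdz_wdzbar_add (ha : ContDiffAt ℝ 2 a z) (hb : ContDiffAt ℝ 2 b z) :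
    wdz (wdzbar fun w => a w + b w) z = wdz (wdzbar a) z + wdz (wdzbar b) z := by
  have hadd : (wdzbar fun w => a w + b w) =ᶠ[𝓝 z] fun w => wdzbar a w + wdzbar b w := by
    filter_upwards [eventually_differentiableAt_of_contDiffAt ha two_ne_zero,
      eventually_differentiableAt_of_contDiffAt hb two_ne_zero] with w haw hbw
    exact wdzbar_add haw hbw
  rw [wdz_congr hadd, wdz_add (differentiableAt_wdzbar ha) (differentiableAt_wdzbar hb)]

theorem wdz_wdzbar_mul (ha : ContDiffAt ℝ 2 a z) (hb : ContDiffAt ℝ 2 b z) :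
    wdz (wdzbar fun w => a w * b w) z =
      wdz (wdzbar a) z * b z + wdzbar a z * wdz b z +
        (wdz a z * wdzbar b z + a z * wdz (wdzbar b) z) := by
  have hleibniz : (wdzbar fun w => a w * b w) =ᶠ[𝓝 z]
      fun w => wdzbar a w * b w + a w * wdzbar b w := by
    filter_upwards [eventually_differentiableAt_of_contDiffAt ha two_ne_zero,
      eventually_differentiableAt_of_contDiffAt hb two_ne_zero] with w haw hbw
    exact wdzbar_mul haw hbw
  have da : DifferentiableAt ℝ a z := ha.differentiableAt two_ne_zero
  have db : DifferentiableAt ℝ b z := hb.differentiableAt two_ne_zero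
  have da' := differentiableAt_wdzbar ha
  have db' := differentiableAt_wdzbar hb
  rw [wdz_congr hleibniz, wdz_add (da'.fun_mul db) (da.fun_mul db'), wdz_mul da' db,
    wdz_mul da db']

end Wirtinger

theorem fderiv_real_apply_eq_smul_deriv {E : Type*} [NormedAddCommGroup E] [NormedSpace ℂ E]
    {A : ℂ → E} {z : ℂ} (hA : DifferentiableAt ℂ A z) (v : ℂ) :
    fderiv ℝ A z v = v • deriv A z := by
  rw [hA.fderiv_restrictScalars ℝ, ContinuousLinearMap.coe_restrictScalars', fderiv_eq_smul_deriv]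

section Inner

variable {E : Type*} [NormedAddCommGroup E] [InnerProductSpace ℂ E] {A B : ℂ → E} {z : ℂ}

theorem wdz_inner (hA : DifferentiableAt ℂ A z) (hB : DifferentiableAt ℂ B z) :
    wdz (fun w => inner ℂ (A w) (B w)) z = inner ℂ (A z) (deriv B z) := by
  simp only [wdz, fderiv_inner_apply ℂ (hA.restrictScalars ℝ) (hB.restrictScalars ℝ),
    fderiv_real_apply_eq_smul_deriv hA, fderiv_real_apply_eq_smul_deriv hB, one_smul,
    inner_smul_left, inner_smul_right, conj_I]
  linear_combination
    (-(inner ℂ (A z) (deriv B z)) / 2 + inner ℂ (deriv A z) (B z) / 2) * I_mul_I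

theorem wdzbar_inner (hA : DifferentiableAt ℂ A z) (hB : DifferentiableAt ℂ B z) :
    wdzbar (fun w => inner ℂ (A w) (B w)) z = inner ℂ (deriv A z) (B z) := by
  simp only [wdzbar, fderiv_inner_apply ℂ (hA.restrictScalars ℝ) (hB.restrictScalars ℝ),
    fderiv_real_apply_eq_smul_deriv hA, fderiv_real_apply_eq_smul_deriv hB, one_smul,
    inner_smul_left, inner_smul_right, conj_I]
  linear_combination
    (inner ℂ (A z) (deriv B z) / 2 - inner ℂ (deriv A z) (B z) / 2) * I_mul_I

theorem differentiableAt_real_inner (hA : DifferentiableAt ℂ A z) (hB : DifferentiableAt ℂ B z) :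
    DifferentiableAt ℝ (fun w => (inner ℂ (A w) (B w) : ℂ)) z :=
  (hA.restrictScalars ℝ).inner ℂ (hB.restrictScalars ℝ)

theorem contDiffAt_real_inner {m : WithTop ℕ∞} (hA : ContDiffAt ℂ m A z)
    (hB : ContDiffAt ℂ m B z) : ContDiffAt ℝ m (fun w => (inner ℂ (A w) (B w) : ℂ)) z :=
  (hA.restrict_scalars ℝ).inner ℂ (hB.restrict_scalars ℝ)

theorem wdz_wdzbar_inner [CompleteSpace E] (hA : AnalyticAt ℂ A z) (hB : AnalyticAt ℂ B z) :
    wdz (wdzbar fun w => inner ℂ (A w) (B w)) z = inner ℂ (deriv A z) (deriv B z) := by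
  have hbar : (wdzbar fun w => inner ℂ (A w) (B w)) =ᶠ[𝓝 z]
      fun w => inner ℂ (deriv A w) (B w) := by
    filter_upwards [hA.eventually_analyticAt, hB.eventually_analyticAt] with w hAw hBw
    exact wdzbar_inner hAw.differentiableAt hBw.differentiableAt
  rw [wdz_congr hbar, wdz_inner hA.deriv.differentiableAt hB.differentiableAt]

variable {φ : ℂ → ℂ}

theorem wdz_mul_inner_self_of_eq_zero (hφ : DifferentiableAt ℝ φ z) (hA : DifferentiableAt ℂ A z)
    (hAz : A z = 0) : wdz (fun w => φ w * inner ℂ (A w) (A w)) z = 0 := by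
  rw [wdz_mul hφ (differentiableAt_real_inner hA hA), wdz_inner hA hA, hAz, inner_zero_left,
    inner_zero_left, mul_zero, mul_zero, add_zero]

theorem wdzbar_mul_inner_self_of_eq_zero (hφ : DifferentiableAt ℝ φ z)
    (hA : DifferentiableAt ℂ A z) (hAz : A z = 0) :
    wdzbar (fun w => φ w * inner ℂ (A w) (A w)) z = 0 := by
  rw [wdzbar_mul hφ (differentiableAt_real_inner hA hA), wdzbar_inner hA hA, hAz,
    inner_zero_right, inner_zero_right, mul_zero, mul_zero, add_zero]

theorem wdz_wdzbar_mul_inner_self_of_eq_zero [CompleteSpace E] (hφ : ContDiffAt ℝ 2 φ z)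
    (hA : AnalyticAt ℂ A z) (hAz : A z = 0) :
    wdz (wdzbar fun w => φ w * inner ℂ (A w) (A w)) z =
      φ z * inner ℂ (deriv A z) (deriv A z) := by
  have dA := hA.differentiableAt
  rw [wdz_wdzbar_mul hφ (contDiffAt_real_inner hA.contDiffAt hA.contDiffAt), wdz_inner dA dA,
    wdzbar_inner dA dA, wdz_wdzbar_inner hA hA, hAz]
  simp only [inner_zero_left, inner_zero_right, mul_zero, add_zero, zero_add]

end Inner

section RealValued

variable {h k : ℂ → ℝ} {z : ℂ}

theorem wdzR_congr (hk : h =ᶠ[𝓝 z] k) : wdzR h z = wdzR k z :=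
  wdz_congr (hk.fun_comp ofReal)

theorem wdzbarR_eventuallyEq (hk : h =ᶠ[𝓝 z] k) : wdzbarR h =ᶠ[𝓝 z] wdzbarR k :=
  wdzbar_eventuallyEq (hk.fun_comp ofReal)

theorem wlapR_congr (hk : h =ᶠ[𝓝 z] k) : wlapR h z = wlapR k z :=
  wdz_congr (wdzbarR_eventuallyEq hk)

end RealValued

section LeafwiseMetric

variable {E F : Type*} [NormedAddCommGroup E] [InnerProductSpace ℂ E]
  [NormedAddCommGroup F] [InnerProductSpace ℂ F]
  {φ : ℂ → ℝ} {g : ℂ → F} {W : ℂ → E} {z : ℂ}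

theorem ofReal_mul_norm_sq_add_norm_sq (r : ℝ) (x : F) (y : E) :
    ((r * ‖x‖ ^ 2 + ‖y‖ ^ 2 : ℝ) : ℂ) = r * inner ℂ x x + inner ℂ y y := by
  simp only [inner_self_eq_norm_sq_to_K, coe_algebraMap, ofReal_add, ofReal_mul, ofReal_pow]

theorem wdzR_mul_norm_sq_add_norm_sq (hφ : DifferentiableAt ℝ φ z) (hg : DifferentiableAt ℂ g z)
    (hgz : g z = 0) (hW : DifferentiableAt ℂ W z) :
    wdzR (fun w => φ w * ‖g w‖ ^ 2 + ‖W w‖ ^ 2) z = inner ℂ (W z) (deriv W z) := by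
  have hφ' : DifferentiableAt ℝ (fun w => (φ w : ℂ)) z := ofRealCLM.differentiableAt.comp z hφ
  simp only [wdzR, ofReal_mul_norm_sq_add_norm_sq]
  rw [wdz_add (hφ'.fun_mul (differentiableAt_real_inner hg hg)) (differentiableAt_real_inner hW hW),
    wdz_mul_inner_self_of_eq_zero hφ' hg hgz, wdz_inner hW hW, zero_add]

theorem wdzbarR_mul_norm_sq_add_norm_sq (hφ : DifferentiableAt ℝ φ z)
    (hg : DifferentiableAt ℂ g z) (hgz : g z = 0) (hW : DifferentiableAt ℂ W z) :
    wdzbarR (fun w => φ w * ‖g w‖ ^ 2 + ‖W w‖ ^ 2) z = inner ℂ (deriv W z) (W z) := by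
  have hφ' : DifferentiableAt ℝ (fun w => (φ w : ℂ)) z := ofRealCLM.differentiableAt.comp z hφ
  simp only [wdzbarR, ofReal_mul_norm_sq_add_norm_sq]
  rw [wdzbar_add (hφ'.fun_mul (differentiableAt_real_inner hg hg))
      (differentiableAt_real_inner hW hW),
    wdzbar_mul_inner_self_of_eq_zero hφ' hg hgz, wdzbar_inner hW hW, zero_add]

variable [CompleteSpace E] [CompleteSpace F]

theorem wlapR_mul_norm_sq_add_norm_sq (hφ : ContDiffAt ℝ 2 φ z) (hg : AnalyticAt ℂ g z)
    (hgz : g z = 0) (hW : AnalyticAt ℂ W z) :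
    wlapR (fun w => φ w * ‖g w‖ ^ 2 + ‖W w‖ ^ 2) z =
      (φ z * ‖deriv g z‖ ^ 2 + ‖deriv W z‖ ^ 2 : ℝ) := by
  have hφ' : ContDiffAt ℝ 2 (fun w => (φ w : ℂ)) z := ofRealCLM.contDiff.contDiffAt.comp z hφ
  simp only [wlapR, wdzbarR, ofReal_mul_norm_sq_add_norm_sq]
  rw [wdz_wdzbar_add (hφ'.mul (contDiffAt_real_inner hg.contDiffAt hg.contDiffAt))
      (contDiffAt_real_inner hW.contDiffAt hW.contDiffAt),
    wdz_wdzbar_mul_inner_self_of_eq_zero hφ' hg hgz, wdz_wdzbar_inner hW hW]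

theorem stmt1_general {V : Set E} (hV : IsOpen V) {f : E → F} (hf : DifferentiableOn ℂ f V)
    {X : E → E} (hX : DifferentiableOn ℂ X V) {p : E} (hker : fderiv ℂ f p (X p) = 0)
    {Φ : F → ℝ} (hΦ : ContDiffAt ℝ 2 Φ (f p)) (hΦp : 0 ≤ Φ (f p))
    {U : Set ℂ} (hU : IsOpen U) {z : ℂ} (hz : z ∈ U)
    {Z : ℂ → E} (hZ : DifferentiableOn ℂ Z U) (hZz : Z z = p) (hZV : Set.MapsTo Z U V)
    (hZ' : ∀ T ∈ U, deriv Z T = X (Z T))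
    {h : ℂ → ℝ}
    (hdef : ∀ T ∈ U, h T = Φ (f (Z T)) * ‖fderiv ℂ f (Z T) (X (Z T))‖ ^ 2 + ‖X (Z T)‖ ^ 2) :
    h z = ‖X p‖ ^ 2 ∧
    wdzR h z = inner ℂ (X p) (fderiv ℂ X p (X p)) ∧
    wdzbarR h z = inner ℂ (fderiv ℂ X p (X p)) (X p) ∧
    (‖fderiv ℂ X p (X p)‖ ^ 2 : ℂ) ≤ wlapR h z := by
  subst hZz
  have hUz : U ∈ 𝓝 z := hU.mem_nhds hz
  have hZd {T : ℂ} (hT : T ∈ U) : DifferentiableAt ℂ Z T := hZ.differentiableAt (hU.mem_nhds hT)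
  have hVT {T : ℂ} (hT : T ∈ U) : V ∈ 𝓝 (Z T) := hV.mem_nhds (hZV hT)
  have hfZ : AnalyticAt ℂ (f ∘ Z) z := (hf.comp hZ hZV).analyticAt hUz
  have hXZ : AnalyticAt ℂ (X ∘ Z) z := (hX.comp hZ hZV).analyticAt hUz
  have hfZ' {T : ℂ} (hT : T ∈ U) : deriv (f ∘ Z) T = fderiv ℂ f (Z T) (X (Z T)) := by
    rw [← hZ' T hT, fderiv_comp_deriv T (hf.differentiableAt (hVT hT)) (hZd hT)]
  have hXZ' : deriv (X ∘ Z) z = fderiv ℂ X (Z z) (X (Z z)) := by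
    rw [fderiv_comp_deriv z (hX.differentiableAt (hVT hz)) (hZd hz), hZ' z hz]
  have hφ : ContDiffAt ℝ 2 (fun T => Φ (f (Z T))) z :=
    hΦ.comp z (hfZ.contDiffAt.restrict_scalars ℝ)
  have hsplit : h =ᶠ[𝓝 z]
      fun T => Φ (f (Z T)) * ‖deriv (f ∘ Z) T‖ ^ 2 + ‖(X ∘ Z) T‖ ^ 2 := by
    filter_upwards [hUz] with T hT
    rw [hdef T hT, hfZ' hT, Function.comp_apply]
  have hφ₁ := hφ.differentiableAt two_ne_zero
  have hg := hfZ.deriv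
  have hgz : deriv (f ∘ Z) z = 0 := (hfZ' hz).trans hker
  rw [← hXZ']
  refine ⟨by simp [hdef z hz, hker], ?_, ?_, ?_⟩
  · exact (wdzR_congr hsplit).trans <|
      wdzR_mul_norm_sq_add_norm_sq hφ₁ hg.differentiableAt hgz hXZ.differentiableAt
  · exact (wdzbarR_eventuallyEq hsplit).eq_of_nhds.trans <|
      wdzbarR_mul_norm_sq_add_norm_sq hφ₁ hg.differentiableAt hgz hXZ.differentiableAt
  · rw [wlapR_congr hsplit, wlapR_mul_norm_sq_add_norm_sq hφ hg hgz hXZ, ← ofReal_pow, real_le_real]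
    exact le_add_of_nonneg_left (mul_nonneg hΦp (sq_nonneg _))

end LeafwiseMetric

/-- the values of `h`, `∂h`, `∂̄h` at `0` and a lower bound for `∂∂̄h(0)`,
for the leafwise restriction of the Grauert-type metric along a kernel direction. -/
theorem stmt1 (n : ℕ) (hn : 2 ≤ n)
    (f : EuclideanSpace ℂ (Fin n) → ℂ) (hf : Differentiable ℂ f)
    (p : EuclideanSpace ℂ (Fin n)) (hfp : f p ≠ 0)
    (V : Set (EuclideanSpace ℂ (Fin n))) (hV : IsOpen V) (hpV : p ∈ V)
    (X : EuclideanSpace ℂ (Fin n) → EuclideanSpace ℂ (Fin n))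
    (hX : DifferentiableOn ℂ X V) (hXp : X p ≠ 0)
    (hker : fderiv ℂ f p (X p) = 0)
    (ε : ℝ) (hε : 0 < ε)
    (Z : ℂ → EuclideanSpace ℂ (Fin n))
    (hZ : DifferentiableOn ℂ Z (Metric.ball 0 ε))
    (hZ0 : Z 0 = p)
    (hZV : ∀ T ∈ Metric.ball (0 : ℂ) ε, Z T ∈ V)
    (hZ' : ∀ T ∈ Metric.ball (0 : ℂ) ε, deriv Z T = X (Z T))
    (hfZ : ∀ T ∈ Metric.ball (0 : ℂ) ε, f (Z T) ≠ 0)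
    (h : ℂ → ℝ)
    (hdef : ∀ T, h T =
      (1 + ‖f (Z T)‖ ^ 2 * u (‖f (Z T)‖ ^ 2) ^ 2) *
        ‖fderiv ℂ f (Z T) (X (Z T))‖ ^ 2 + ‖X (Z T)‖ ^ 2) :
    h 0 = ‖X p‖ ^ 2 ∧
    wdzR h 0 = (inner ℂ (X p) (fderiv ℂ X p (X p)) : ℂ) ∧
    wdzbarR h 0 = (inner ℂ (fderiv ℂ X p (X p)) (X p) : ℂ) ∧
    (‖fderiv ℂ X p (X p)‖ ^ 2 : ℂ) ≤ wlapR h 0 :=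
  stmt1_general hV hf.differentiableOn hX hker (contDiffAt_grauertWeight hfp)
    (grauertWeight_nonneg _) isOpen_ball (mem_ball_self hε) hZ hZ0 hZV hZ' fun T _ => hdef T
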